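/- Let K be a local class, over a locally finite relational signature, every member of which satisfies the Symmetry schema; let F be the Fraïssé limit of K with underlying set V. Let G be a finite group, H ⊆ G a subgroup, and S ⊂ V a finite subset. Suppose ρ is a left action of H on F↾S by automorphisms with trivial stabilizers. Then there is a finite subset S' ⊂ V with S ⊆ S' and an action ρ' of G on F↾S' by automorphisms with trivial stabilizers whose restriction to H × F↾S coincides with ρ. -/

import Mathlib

open FirstOrder FirstOrder.Language

universe u v

/-- A finite structure for a relational signature `L`, with underlying set a finite subset of `ℕ`,
given by its relation interpretations (sets of tuples of natural numbers). -/
structure FinStruc (L : FirstOrder.Language.{u, v}) where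
  carrier : Finset ℕ
  rel : ∀ ⦃n : ℕ⦄, L.Relations n → Set (Fin n → ℕ)
  rel_mem : ∀ ⦃n : ℕ⦄ (R : L.Relations n) (t : Fin n → ℕ), t ∈ rel R → ∀ i, t i ∈ carrier

variable {L : FirstOrder.Language.{u, v}}

/-- The first-order structure on the underlying set of a `FinStruc`. -/
instance FinStruc.str [L.IsRelational] (A : FinStruc L) :
    L.Structure {x : ℕ // x ∈ A.carrier} where
  funMap := fun f _ => isEmptyElim f
  RelMap := fun {n} R t => (fun i => (t i : ℕ)) ∈ A.rel R

/-- Satisfaction of a sentence in a `FinStruc`. -/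
def FinStruc.Sat [L.IsRelational] (A : FinStruc L) (φ : L.Sentence) : Prop :=
  {x : ℕ // x ∈ A.carrier} ⊨ φ

/-- The General Irreflexivity axiom for a relation symbol `R` and coordinates `i`, `j`:
`∀ x₁ … xₙ, R (x₁, …, xₙ) → ¬ (xᵢ = xⱼ)`. -/
def giSentence {n : ℕ} (R : L.Relations n) (i j : Fin n) : L.Sentence :=
  BoundedFormula.alls
    ((Relations.boundedFormula R fun k => Term.var (Sum.inr k)).imp
      (Term.bdEqual (Term.var (Sum.inr i)) (Term.var (Sum.inr j))).not)

/-- The General Irreflexivity axiom schema `Φ^Σ_GI`. -/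
def GITheory (L : FirstOrder.Language.{u, v}) : L.Theory :=
  { φ | ∃ (n : ℕ) (R : L.Relations n) (i j : Fin n), i ≠ j ∧ φ = giSentence R i j }

/-- A sentence is local if it has the form `∀ x₁ … xₘ, R (x₁, …, xₘ) → ψ` with `m > 0` and
`ψ` quantifier-free. -/
def IsLocalSentence (φ : L.Sentence) : Prop :=
  ∃ m : ℕ, 0 < m ∧ ∃ (R : L.Relations m) (ψ : L.BoundedFormula Empty m), ψ.IsQF ∧
    φ = BoundedFormula.alls ((Relations.boundedFormula R fun k => Term.var (Sum.inr k)).imp ψ)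

/-- A class of finite structures is local if it is the class of models of a set of local
sentences containing the General Irreflexivity axioms. -/
def IsLocalClass [L.IsRelational] (K : Set (FinStruc L)) : Prop :=
  ∃ Φ : L.Theory, (∀ φ ∈ Φ, IsLocalSentence φ) ∧ GITheory L ⊆ Φ ∧
    K = { A : FinStruc L | ∀ φ ∈ Φ, A.Sat φ }

/-- The `n`-frame of a structure: same underlying set, same interpretations of relation symbols
of arity at most `n`, empty interpretation of all higher-arity relation symbols. -/
def FinStruc.frame (A : FinStruc L) (n : ℕ) : FinStruc L where
  carrier := A.carrier
  rel := fun m R => if m ≤ n then A.rel R else ∅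
  rel_mem := by
    intro m R t ht i
    by_cases h : m ≤ n
    · exact A.rel_mem R t (by simpa [h] using ht) i
    · simp [h] at ht

/-- The induced substructure of `B` on a finite set `X`. -/
def FinStruc.restrict (B : FinStruc L) (X : Finset ℕ) : FinStruc L where
  carrier := B.carrier ∩ X
  rel := fun _ R => { t | t ∈ B.rel R ∧ ∀ i, t i ∈ X }
  rel_mem := fun _ R t ht i => Finset.mem_inter.2 ⟨B.rel_mem R t ht.1 i, ht.2 i⟩

/-- `A` is the induced substructure of `B` on the subset `A.carrier` of `B.carrier`. -/
def FinStruc.IsInducedSub (A B : FinStruc L) : Prop :=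
  A.carrier ⊆ B.carrier ∧
    ∀ ⦃n : ℕ⦄ (R : L.Relations n) (t : Fin n → ℕ),
      (∀ i, t i ∈ A.carrier) → (t ∈ A.rel R ↔ t ∈ B.rel R)

/-- `A` is isomorphic to `B`: there is a bijection of the underlying sets preserving all
relations in both directions. -/
def FinStruc.IsIsoTo (A B : FinStruc L) : Prop :=
  ∃ f : ℕ → ℕ, Set.BijOn f ↑A.carrier ↑B.carrier ∧
    ∀ ⦃n : ℕ⦄ (R : L.Relations n) (t : Fin n → ℕ), (∀ i, t i ∈ A.carrier) →
      (t ∈ A.rel R ↔ (fun i => f (t i)) ∈ B.rel R)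

/-- The Adoptive Property. -/
def AdoptiveProperty (K : Set (FinStruc L)) : Prop :=
  ∀ (n : ℕ) (B A A' : FinStruc L), B ∈ K → A ∈ K → A' ∈ K →
    A.IsInducedSub B → A.carrier.card = n → A'.carrier = A.carrier →
    A'.frame (n - 1) = A.frame (n - 1) →
    ∃ B' ∈ K, B'.carrier = B.carrier ∧ B'.frame (n - 1) = B.frame (n - 1) ∧
      ∀ R : L.Relations n,
        B'.rel R = (B.rel R \ { t | ∀ i, t i ∈ A.carrier }) ∪ A'.rel R

/-- A structure for `L` with underlying set `ℕ`, given by its relation interpretations. -/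
structure InfStruc (L : FirstOrder.Language.{u, v}) where
  rel : ∀ ⦃n : ℕ⦄, L.Relations n → Set (Fin n → ℕ)

/-- The first-order structure on `ℕ` determined by an `InfStruc`. -/
def InfStruc.str [L.IsRelational] (M : InfStruc L) : L.Structure ℕ where
  funMap := fun f _ => isEmptyElim f
  RelMap := fun {n} R t => t ∈ M.rel R

/-- Satisfaction of a sentence in an `InfStruc`. -/
def InfStruc.Sat [L.IsRelational] (M : InfStruc L) (φ : L.Sentence) : Prop :=
  @FirstOrder.Language.Sentence.Realize L ℕ M.str φ

/-- The induced finite substructure of an `InfStruc` on a finite set `X`. -/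
def InfStruc.restrict (M : InfStruc L) (X : Finset ℕ) : FinStruc L where
  carrier := X
  rel := fun _ R => { t | t ∈ M.rel R ∧ ∀ i, t i ∈ X }
  rel_mem := fun _ _ _ ht i => ht.2 i

/-- The bundled structures isomorphic to a member of `K`. -/
def toBundled (L : FirstOrder.Language.{u, v}) [L.IsRelational] (K : Set (FinStruc L)) :
    Set (CategoryTheory.Bundled.{0} L.Structure) :=
  { M | ∃ A ∈ K, Nonempty (M ≃[L] {x : ℕ // x ∈ A.carrier}) }

/-- `K^{X,l}_{A,k}`: the set of `l`-frames of members `B` of `K` with underlying set `X` whose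
`k`-frame restricted to the underlying set of `A` is the `k`-frame of `A`. -/
def KsetFr (K : Set (FinStruc L)) (X : Finset ℕ) (l : ℕ) (A : FinStruc L) (k : ℕ) :
    Set (FinStruc L) :=
  { F | ∃ B ∈ K, B.carrier = X ∧ (B.frame k).restrict A.carrier = A.frame k ∧ F = B.frame l }

/-- `N(S,k)`: the number of distinct `(k+1)`-frames of members of `K` on the underlying set of `S`
whose `k`-frame is the `k`-frame of `S`. -/
noncomputable def Ncount (K : Set (FinStruc L)) (S : FinStruc L) (k : ℕ) : ℕ :=
  (KsetFr K S.carrier (k + 1) S k).ncard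

/-- Every member of `K` satisfies the Symmetry schema: each relation is invariant under all
permutations of its arguments. -/
def SymmetricClass (K : Set (FinStruc L)) : Prop :=
  ∀ A ∈ K, ∀ ⦃n : ℕ⦄ (R : L.Relations n) (σ : _root_.Equiv.Perm (Fin n)) (t : Fin n → ℕ),
    t ∈ A.rel R → (t ∘ σ) ∈ A.rel R

/-- `ρ` is a left action of the group `H` on the induced substructure of `F` on the subset `S`,
by automorphisms of that substructure. -/
def ActsOn (L : FirstOrder.Language.{u, v}) (F : Type*) [L.Structure F] (H : Type*) [Group H]
    (ρ : H → F → F) (S : Set F) : Prop :=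
  (∀ h : H, Set.BijOn (ρ h) S S) ∧
  (∀ x ∈ S, ρ 1 x = x) ∧
  (∀ g h : H, ∀ x ∈ S, ρ (g * h) x = ρ g (ρ h x)) ∧
  (∀ h : H, ∀ ⦃n : ℕ⦄ (R : L.Relations n) (t : Fin n → F), (∀ i, t i ∈ S) →
    (Structure.RelMap R t ↔ Structure.RelMap R fun i => ρ h (t i)))

/-- The disjoint union of copies of `P` indexed by `Q`. -/
def Copies (Q P : Type) : Type := Q × P

instance Copies.str [L.IsRelational] (Q P : Type) [L.Structure P] : L.Structure (Copies Q P) where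
  funMap := fun f _ => isEmptyElim f
  RelMap := fun {_} R t => (∃ q, ∀ i, (t i).1 = q) ∧ Structure.RelMap R (fun i => (t i).2)

/-- The inclusion of one copy. -/
def Copies.incl [L.IsRelational] (Q P : Type) [L.Structure P] (q : Q) : P ↪[L] Copies Q P where
  toFun := fun p => (q, p)
  inj' := fun a b h => (Prod.ext_iff.1 h).2
  map_fun' := fun f => isEmptyElim f
  map_rel' := by
    intro n R t
    exact ⟨fun h => h.2, fun h => ⟨⟨q, fun _ => rfl⟩, h⟩⟩

lemma Copies.realize [L.IsRelational] (Q P : Type) [L.Structure P] (φ : L.Sentence)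
    (hφ : IsLocalSentence φ) (h : P ⊨ φ) : Copies Q P ⊨ φ := by
  obtain ⟨m, hm, R, ψ, hψ, rfl⟩ := hφ
  simp only [Sentence.Realize, BoundedFormula.realize_alls,
    BoundedFormula.realize_imp, BoundedFormula.realize_rel, Term.realize_var, Sum.elim_inr] at h ⊢
  intro xs hxs
  obtain ⟨⟨q, hq⟩, hr⟩ := hxs
  have h1 := h (fun i => (xs i).2) hr
  have h2 := (hψ.realize_embedding (Copies.incl (L := L) Q P q)).2 h1
  convert h2 using 1
  funext i
  exact Prod.ext (hq i) rfl

/-- A copy of a finite structure on an initial segment of `ℕ`. -/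
def codeStruc (T : Type) [L.Structure T] {n : ℕ} (e : T ≃ Fin n) : FinStruc L where
  carrier := Finset.range n
  rel := fun m R => { t | ∃ s : Fin m → T, Structure.RelMap R s ∧ t = fun i => (e (s i) : ℕ) }
  rel_mem := by
    rintro m R t ⟨s, -, rfl⟩ i
    exact Finset.mem_range.2 (e (s i)).2

lemma mem_toBundled [L.IsRelational] (K : Set (FinStruc L)) (Φ : L.Theory)
    (hK : K = { A : FinStruc L | ∀ φ ∈ Φ, A.Sat φ }) (T : Type) [Finite T] [L.Structure T]
    (hT : ∀ φ ∈ Φ, T ⊨ φ) : (⟨T, inferInstance⟩ : CategoryTheory.Bundled.{0} L.Structure) ∈ toBundled L K := by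
  obtain ⟨n, ⟨e⟩⟩ := Finite.exists_equiv_fin T
  let E : T ≃[L] {x : ℕ // x ∈ (codeStruc (L := L) T e).carrier} :=
    { toFun := fun t => ⟨e t, Finset.mem_range.2 (e t).2⟩
      invFun := fun x => e.symm ⟨x.1, Finset.mem_range.1 x.2⟩
      left_inv := fun t => by simp
      right_inv := fun x => by simp
      map_fun' := fun f => isEmptyElim f
      map_rel' := by
        intro m R t
        constructor
        · rintro ⟨s, hs, hst⟩
          have : t = s := by
            funext i
            have := congrFun hst i
            exact e.injective (Fin.ext this)
          rwa [this]
        · intro h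
          exact ⟨t, h, rfl⟩ }
  refine ⟨codeStruc T e, ?_, ⟨E⟩⟩
  rw [hK]
  intro φ hφ
  exact (StrongHomClass.realize_sentence E φ).1 (hT φ hφ)

lemma realize_of_mem_toBundled [L.IsRelational] (K : Set (FinStruc L)) (Φ : L.Theory)
    (hK : K = { A : FinStruc L | ∀ φ ∈ Φ, A.Sat φ }) (T : Type) [L.Structure T]
    (hT : (⟨T, inferInstance⟩ : CategoryTheory.Bundled.{0} L.Structure) ∈ toBundled L K) : ∀ φ ∈ Φ, T ⊨ φ := by
  obtain ⟨A, hA, ⟨E⟩⟩ := hT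
  rw [hK] at hA
  intro φ hφ
  exact (StrongHomClass.realize_sentence E φ).2 (hA φ hφ)

/-- A section of `G → G ⧸ H` sending the trivial coset to `1`. -/
noncomputable def sec {G : Type} [Group G] (H : Subgroup G) (q : G ⧸ H) : G :=
  q.out * ((1 : G) : G ⧸ H).out⁻¹

lemma sec_one {G : Type} [Group G] (H : Subgroup G) : sec H ((1 : G) : G ⧸ H) = 1 := by
  simp [sec]

lemma mk_sec {G : Type} [Group G] (H : Subgroup G) (q : G ⧸ H) : ((sec H q : G) : G ⧸ H) = q := by
  have h1 : ((1 : G) : G ⧸ H).out ∈ H := by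
    have := Quotient.out_eq' ((1 : G) : G ⧸ H)
    have := QuotientGroup.eq.1 this
    simpa using this
  conv_rhs => rw [← Quotient.out_eq' q]
  apply QuotientGroup.eq.2
  simpa [sec] using h1

lemma coc_mem {G : Type} [Group G] (H : Subgroup G) (g : G) (q : G ⧸ H) :
    (sec H (g • q))⁻¹ * (g * sec H q) ∈ H := by
  apply QuotientGroup.eq.1
  rw [mk_sec]
  conv_lhs => rw [← mk_sec H q]
  rfl

/-- The cocycle. -/
noncomputable def coc {G : Type} [Group G] (H : Subgroup G) (g : G) (q : G ⧸ H) : H :=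
  ⟨(sec H (g • q))⁻¹ * (g * sec H q), coc_mem H g q⟩

/-- Any action with trivial stabilizers of a subgroup `H` of a finite group `G` on a finite
induced substructure of the Fraïssé limit of a local class with symmetric relations extends to
an action of `G` with trivial stabilizers on a larger finite induced substructure. -/
theorem statement_15 (L : FirstOrder.Language.{u, v}) [L.IsRelational]
    [∀ n, Finite (L.Relations n)] [Countable (Σ l, L.Functions l)]
    (K : Set (FinStruc L)) (hK : IsLocalClass K) (hsym : SymmetricClass K)
    (F : Type) [L.Structure F] [Countable F] (hF : IsFraisseLimit (toBundled L K) F)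
    (G : Type) [Group G] [Finite G] (H : Subgroup G)
    (S : Set F) (hS : S.Finite)
    (ρ : H → F → F) (hρ : ActsOn L F H ρ S)
    (hfree : ∀ h : H, ∀ x ∈ S, ρ h x = x → h = 1) :
    ∃ S' : Set F, S'.Finite ∧ S ⊆ S' ∧
      ∃ ρ' : G → F → F, ActsOn L F G ρ' S' ∧
        (∀ h : H, ∀ x ∈ S, ρ' (h : G) x = ρ h x) ∧
        (∀ g : G, ∀ x ∈ S', ρ' g x = x → g = 1) := by
  classical
  obtain ⟨Φ, hloc, -, hKΦ⟩ := hK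
  obtain ⟨hbij, hone, hmul, hrel⟩ := hρ
  -- the substructure on `S`
  let P : L.Substructure F := ⟨S, fun f => isEmptyElim f⟩
  have hPfg : P.FG := Substructure.fg_def.2 ⟨S, hS, by
    apply SetLike.coe_injective
    rw [Substructure.closure_eq_of_isRelational]
    rfl⟩
  have hPfg' : Structure.FG L P := P.fg_iff_structure_fg.1 hPfg
  have hPfin : Finite P := hS.to_subtype
  have hPage : (⟨P, inferInstance⟩ : CategoryTheory.Bundled.{0} L.Structure) ∈ toBundled L K := by
    rw [← hF.age]
    exact ⟨hPfg', ⟨P.subtype⟩⟩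
  have hPsat := realize_of_mem_toBundled K Φ hKΦ P hPage
  have hTfin : Finite (Copies (G ⧸ H) P) := inferInstanceAs (Finite ((G ⧸ H) × P))
  have hTsat : ∀ φ ∈ Φ, Copies (G ⧸ H) P ⊨ φ := fun φ hφ =>
    Copies.realize _ _ φ (hloc φ hφ) (hPsat φ hφ)
  have hTage : (⟨Copies (G ⧸ H) P, inferInstance⟩ :
      CategoryTheory.Bundled.{0} L.Structure) ∈ L.age F := by
    rw [hF.age]
    exact mem_toBundled K Φ hKΦ _ hTsat
  have hne : Nonempty (Copies (G ⧸ H) P ↪[L] F) := hTage.2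
  obtain ⟨e, he⟩ := hF.ultrahomogeneous.extend_embedding hPfg' P.subtype
    (Copies.incl (L := L) (G ⧸ H) P ((1 : G) : G ⧸ H))
  have he' : ∀ (x : F) (hx : x ∈ S), e (Copies.incl (L := L) (G ⧸ H) P
      ((1 : G) : G ⧸ H) (⟨x, hx⟩ : P)) = x := by
    intro x hx
    have := DFunLike.congr_fun he (⟨x, hx⟩ : P)
    exact this.symm
  -- the action on copies
  let act : G → Copies (G ⧸ H) P → Copies (G ⧸ H) P := fun g t =>
    ((g • t.1 : G ⧸ H), (⟨ρ (coc H g t.1) t.2.1, (hbij _).mapsTo t.2.2⟩ : P))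
  have act_one : ∀ t, act 1 t = t := by
    rintro ⟨q, p, hp⟩
    refine Prod.ext (one_smul _ _) (Subtype.ext ?_)
    change ρ (coc H 1 q) p = p
    have : coc H 1 q = 1 := by
      apply Subtype.ext
      simp [coc]
    rw [this, hone p hp]
  have act_mul : ∀ g g' t, act (g * g') t = act g (act g' t) := by
    rintro g g' ⟨q, p, hp⟩
    refine Prod.ext (mul_smul _ _ _) (Subtype.ext ?_)
    change ρ (coc H (g * g') q) p = ρ (coc H g (g' • q)) (ρ (coc H g' q) p)
    have : coc H (g * g') q = coc H g (g' • q) * coc H g' q := by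
      apply Subtype.ext
      simp [coc, mul_smul, mul_assoc]
    rw [this, hmul _ _ p hp]
  have act_free : ∀ g t, act g t = t → g = 1 := by
    rintro g ⟨q, p, hp⟩ h
    have h1 : g • q = q := congrArg Prod.fst h
    have h2 : ρ (coc H g q) p = p := congrArg (fun t => (t.2 : P).1) h
    have h3 := congrArg Subtype.val (hfree _ p hp h2)
    simp only [coc, h1, OneMemClass.coe_one] at h3
    have h4 := inv_mul_eq_one.1 h3
    exact (mul_eq_right.1 h4.symm)
  have act_rel' : ∀ g ⦃n : ℕ⦄ (R : L.Relations n) (t : Fin n → Copies (G ⧸ H) P),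
      Structure.RelMap R t → Structure.RelMap R (fun i => act g (t i)) := by
    rintro g n R t ⟨⟨q, hq⟩, hr⟩
    refine ⟨⟨g • q, fun i => congrArg (g • ·) (hq i)⟩, ?_⟩
    have hr' : Structure.RelMap R (fun i => ((t i).2 : F)) := hr
    have := (hrel (coc H g q) R (fun i => ((t i).2 : F)) (fun i => (t i).2.2)).1 hr'
    change Structure.RelMap R (fun i => ρ (coc H g (t i).1) ((t i).2 : F))
    simpa only [hq] using this
  have act_inv : ∀ g t, act g⁻¹ (act g t) = t := fun g t => by
    rw [← act_mul, inv_mul_cancel, act_one]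
  have act_inv' : ∀ g t, act g (act g⁻¹ t) = t := fun g t => by
    rw [← act_mul, mul_inv_cancel, act_one]
  have act_rel : ∀ g ⦃n : ℕ⦄ (R : L.Relations n) (t : Fin n → Copies (G ⧸ H) P),
      Structure.RelMap R t ↔ Structure.RelMap R (fun i => act g (t i)) := by
    intro g n R t
    refine ⟨act_rel' g R t, fun h => ?_⟩
    have := act_rel' g⁻¹ R _ h
    simpa only [act_inv] using this
  let ρ' : G → F → F := fun g x => if h : ∃ t, e t = x then e (act g h.choose) else x
  have hρ' : ∀ g t, ρ' g (e t) = e (act g t) := by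
    intro g t
    have h : ∃ t', e t' = e t := ⟨t, rfl⟩
    have h2 : h.choose = t := e.injective h.choose_spec
    simp only [ρ', dif_pos h, h2]
  refine ⟨Set.range e, Set.finite_range _, fun x hx => ⟨_, he' x hx⟩, ρ', ⟨?_, ?_, ?_, ?_⟩, ?_, ?_⟩
  · intro g
    refine ⟨?_, ?_, ?_⟩
    · rintro _ ⟨t, rfl⟩
      exact ⟨_, (hρ' g t).symm⟩
    · rintro _ ⟨t, rfl⟩ _ ⟨t', rfl⟩ h
      rw [hρ', hρ'] at h
      have := e.injective h
      rw [← act_inv g t, this, act_inv]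
    · rintro _ ⟨t, rfl⟩
      exact ⟨e (act g⁻¹ t), ⟨_, rfl⟩, by rw [hρ', act_inv']⟩
  · rintro _ ⟨t, rfl⟩
    rw [hρ', act_one]
  · rintro g h _ ⟨t, rfl⟩
    rw [hρ', hρ', hρ', act_mul]
  · intro g n R t ht
    choose s hs using ht
    obtain rfl : (fun i => e (s i)) = t := funext hs
    simp only [hρ']
    have h1 := e.map_rel R s
    have h2 := e.map_rel R (fun i => act g (s i))
    exact h1.trans ((act_rel g R s).trans h2.symm)
  · intro h x hx
    have h1 : ((h : G) • ((1 : G) : G ⧸ H)) = ((1 : G) : G ⧸ H) := by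
      apply QuotientGroup.eq.2
      simp
    have h2 : coc H (h : G) ((1 : G) : G ⧸ H) = h := by
      apply Subtype.ext
      simp only [coc, h1, sec_one]
      simp
    conv_lhs => rw [← he' x hx]
    rw [hρ', ← he' (ρ h x) ((hbij h).mapsTo hx)]
    congr 1
    refine Prod.ext h1 (Subtype.ext ?_)
    change ρ (coc H (h : G) ((1 : G) : G ⧸ H)) x = ρ h x
    rw [h2]
  · rintro g _ ⟨t, rfl⟩ h
    rw [hρ'] at h
    exact act_free g t (e.injective h)
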